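/- arXiv:2303.01967 — 3 statements merged into one kernel-verified Lean document; each statement's English description precedes it below -/
import Mathlib

section
/- There exists a constant C > 0 such that for every integer n ≥ 1 there exist real coefficients a_0, a_1, …, a_n and positive real numbers ε_1, …, ε_n such that for all x ∈ [0,1], |√x − (a_0 + Σ_{k=1}^n a_k/(1 + x/ε_k))| ≤ exp(−C·√n). That is, the function √x on [0,1] admits root-exponentially convergent approximations by degree-n rational functions written in partial fraction form with poles −ε_k on the negative real axis. -/
/-!
Substituting `u = e ^ s` in `√x = (2 / π) ∫ u in Ioi 0, x / (x + u ^ 2)` writes `√x` as an integral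
over the whole line, and every trapezoidal sum for it, with finitely many nodes `s`, is a rational
function of `x` in partial fraction form with poles `-e ^ (2 * s)`.

The integrand equals `(√x / 2) * sech (s - log √x)`, and `sech` has Fourier transform
`w ↦ π * sech (π ^ 2 * w)`. By Poisson summation the infinite trapezoidal sum of step `h` therefore
has error `O(e ^ (-π ^ 2 / h))`. On `[0, 1]` the integrand is at most `e ^ (-|s|)`, so keeping only
the `n` nodes nearest to `0` costs `O(e ^ (-h * n / 2))`. Both errors are root-exponential for
`h = π / √n`.
-/

open Asymptotics Filter MeasureTheory Real
open scoped FourierTransform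

section GeometricTails

variable {E : Type*} [NormedAddCommGroup E] {f : ℤ → E} {n : ℕ} {B q : ℝ}

lemma norm_tsum_nat_le_of_norm_le_geometric {g : ℕ → E} (hq0 : 0 ≤ q) (hq1 : q < 1)
    (hg : ∀ j, ‖g j‖ ≤ B * q ^ j) : ‖∑' j, g j‖ ≤ B / (1 - q) :=
  tsum_of_norm_bounded ((hasSum_geometric_of_lt_one hq0 hq1).mul_left B) hg

variable [CompleteSpace E]

lemma summable_nat_of_norm_le_geometric {g : ℕ → E} (hq0 : 0 ≤ q) (hq1 : q < 1)
    (hg : ∀ j, ‖g j‖ ≤ B * q ^ j) : Summable g :=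
  .of_norm_bounded ((summable_geometric_of_lt_one hq0 hq1).mul_left B) hg

lemma summable_int_of_norm_le_geometric (hq0 : 0 ≤ q) (hq1 : q < 1)
    (hpos : ∀ j : ℕ, ‖f (j + n : ℕ)‖ ≤ B * q ^ j)
    (hneg : ∀ j : ℕ, ‖f (-(j + 1))‖ ≤ B * q ^ j) : Summable f :=
  .of_nat_of_neg_add_one
    ((summable_nat_add_iff (f := fun j : ℕ ↦ f j) n).1 <|
      summable_nat_of_norm_le_geometric hq0 hq1 hpos)
    (summable_nat_of_norm_le_geometric hq0 hq1 hneg)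

lemma norm_tsum_int_sub_sum_range_le (hq0 : 0 ≤ q) (hq1 : q < 1)
    (hpos : ∀ j : ℕ, ‖f (j + n : ℕ)‖ ≤ B * q ^ j)
    (hneg : ∀ j : ℕ, ‖f (-(j + 1))‖ ≤ B * q ^ j) :
    ‖∑' k : ℤ, f k - ∑ k ∈ Finset.range n, f k‖ ≤ 2 * B / (1 - q) := by
  have hnat : Summable fun j : ℕ ↦ f j :=
    (summable_nat_add_iff n).1 <| summable_nat_of_norm_le_geometric hq0 hq1 hpos
  have hsplit : ∑' k : ℤ, f k - ∑ k ∈ Finset.range n, f k =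
      ∑' j : ℕ, f (j + n : ℕ) + ∑' j : ℕ, f (-(j + 1)) := by
    rw [tsum_of_nat_of_neg_add_one hnat (summable_nat_of_norm_le_geometric hq0 hq1 hneg),
      ← hnat.sum_add_tsum_nat_add n]
    abel
  calc ‖∑' k : ℤ, f k - ∑ k ∈ Finset.range n, f k‖
      ≤ ‖∑' j : ℕ, f (j + n : ℕ)‖ + ‖∑' j : ℕ, f (-(j + 1))‖ := hsplit ▸ norm_add_le _ _
    _ ≤ B / (1 - q) + B / (1 - q) := add_le_add
        (norm_tsum_nat_le_of_norm_le_geometric hq0 hq1 hpos)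
        (norm_tsum_nat_le_of_norm_le_geometric hq0 hq1 hneg)
    _ = 2 * B / (1 - q) := by ring

end GeometricTails

section TrapezoidalRule

lemma fourier_comp_const_mul {E : Type*} [NormedAddCommGroup E] [NormedSpace ℂ E]
    (f : ℝ → E) {h : ℝ} (hh : h ≠ 0) (w : ℝ) :
    𝓕 (fun t ↦ f (h * t)) w = |h⁻¹| • 𝓕 f (w / h) := by
  have hint := Measure.integral_comp_mul_left
    (fun v ↦ Complex.exp (↑(-2 * π * v * (w / h)) * Complex.I) • f v) h
  rw [Real.fourier_real_eq_integral_exp_smul, Real.fourier_real_eq_integral_exp_smul, ← hint]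
  congr! 5 with t
  field_simp

variable {f : ℝ → ℂ} {A b c : ℝ}

lemma norm_tsum_int_add_sub_fourier_zero_le (hf : Continuous f) (hb : 1 < b)
    (hdecay : f =O[cocompact ℝ] (|·| ^ (-b))) (hc : 0 < c)
    (hF : ∀ k : ℤ, ‖𝓕 f k‖ ≤ A * exp (-(c * |(k : ℝ)|))) (t : ℝ) :
    ‖∑' k : ℤ, f (t + k) - 𝓕 f 0‖ ≤ 2 * A / (exp c - 1) := by
  have hq0 : 0 ≤ exp (-c) := (Real.exp_pos _).le
  have hq1 : exp (-c) < 1 := Real.exp_lt_one_iff.2 (neg_neg_of_pos hc)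
  let G : ℤ → ℂ := fun k ↦ 𝓕 f k * fourier k (t : UnitAddCircle)
  have hgeom (k : ℤ) (j : ℕ) (hk : |k| = j + 1) :
      ‖G k‖ ≤ A * exp (-c) * exp (-c) ^ j := by
    have hk' : |(k : ℝ)| = j + 1 := mod_cast hk
    calc ‖G k‖ = ‖𝓕 f k‖ := by
          rw [norm_mul, fourier_apply, Circle.norm_coe, mul_one]
      _ ≤ A * exp (-(c * (j + 1))) := hk' ▸ hF k
      _ = A * exp (-c) * exp (-c) ^ j := by
          rw [← Real.exp_nat_mul, mul_assoc, ← Real.exp_add]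
          ring_nf
  have hpos (j : ℕ) : ‖G (j + 1 : ℕ)‖ ≤ A * exp (-c) * exp (-c) ^ j :=
    hgeom _ j (by push_cast; exact abs_of_nonneg (by positivity))
  have hneg (j : ℕ) : ‖G (-(j + 1))‖ ≤ A * exp (-c) * exp (-c) ^ j :=
    hgeom _ j (by rw [abs_neg]; exact abs_of_nonneg (by positivity))
  have hsum : Summable fun k : ℤ ↦ 𝓕 f k :=
    .of_norm <| (summable_int_of_norm_le_geometric hq0 hq1 hpos hneg).norm.congr fun k ↦ by
      rw [norm_mul, fourier_apply, Circle.norm_coe, mul_one]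
  have hzero : ∑ k ∈ Finset.range 1, G k = 𝓕 f 0 := by simp [G]
  rw [Real.tsum_eq_tsum_fourier_of_rpow_decay_of_summable hf hb hdecay hsum, ← hzero]
  refine (norm_tsum_int_sub_sum_range_le hq0 hq1 hpos hneg).trans_eq ?_
  have hne : exp c - 1 ≠ 0 := (sub_pos.2 (Real.one_lt_exp_iff.2 hc)).ne'
  rw [Real.exp_neg]
  field_simp

lemma norm_mul_tsum_sub_integral_le (hf : Continuous f) (hb : 1 < b)
    (hdecay : f =O[cocompact ℝ] (|·| ^ (-b))) (hc : 0 < c)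
    (hF : ∀ w, ‖𝓕 f w‖ ≤ A * exp (-(c * |w|))) {h : ℝ} (hh : 0 < h) (t : ℝ) :
    ‖h * ∑' k : ℤ, f (h * (t + k)) - ∫ s, f s‖ ≤ 2 * A / (exp (c / h) - 1) := by
  have hdecay_h : (fun s ↦ f (h * s)) =O[cocompact ℝ] (|·| ^ (-b)) := by
    have htendsto : Tendsto (h * ·) (cocompact ℝ) (cocompact ℝ) :=
      (Homeomorph.mulLeft₀ h hh.ne').isClosedEmbedding.tendsto_cocompact
    refine (hdecay.comp_tendsto htendsto).trans (.of_bound (|h| ^ (-b)) (.of_forall fun s ↦ ?_))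
    rw [Function.comp_apply, abs_mul, Real.mul_rpow (abs_nonneg _) (abs_nonneg _), norm_mul,
      Real.norm_of_nonneg (by positivity : 0 ≤ |h| ^ (-b))]
  have hF_h (k : ℤ) : ‖𝓕 (fun s ↦ f (h * s)) k‖ ≤ A / h * exp (-(c / h * |(k : ℝ)|)) := by
    rw [fourier_comp_const_mul f hh.ne', abs_of_pos (inv_pos.2 hh), norm_smul, norm_inv,
      Real.norm_of_nonneg hh.le]
    calc h⁻¹ * ‖𝓕 f (k / h)‖ ≤ h⁻¹ * (A * exp (-(c * |(k : ℝ) / h|))) := by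
          gcongr
          exact hF _
      _ = A / h * exp (-(c / h * |(k : ℝ)|)) := by
          rw [abs_div, abs_of_pos hh]
          ring_nf
  have hzero : 𝓕 (fun s ↦ f (h * s)) 0 = h⁻¹ * ∫ s, f s := by
    rw [fourier_comp_const_mul f hh.ne', abs_of_pos (inv_pos.2 hh), zero_div,
      Real.fourier_real_eq_integral_exp_smul]
    simp
  have hpoisson := norm_tsum_int_add_sub_fourier_zero_le (hf.comp (continuous_const_mul h)) hb
    hdecay_h (div_pos hc hh) hF_h t
  have hh' : (h : ℂ) ≠ 0 := mod_cast hh.ne'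
  calc ‖h * ∑' k : ℤ, f (h * (t + k)) - ∫ s, f s‖
      = ‖h * (∑' k : ℤ, f (h * (t + k)) - 𝓕 (fun s ↦ f (h * s)) 0)‖ := by
        rw [hzero, mul_sub, Complex.ofReal_inv, mul_inv_cancel_left₀ hh']
    _ = h * ‖∑' k : ℤ, f (h * (t + k)) - 𝓕 (fun s ↦ f (h * s)) 0‖ := by
        rw [norm_mul, Complex.norm_of_nonneg hh.le]
    _ ≤ h * (2 * (A / h) / (exp (c / h) - 1)) := by gcongr; exact hpoisson
    _ = 2 * A / (exp (c / h) - 1) := by field_simp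

end TrapezoidalRule

section Sech

lemma inv_cosh_le_two_mul_exp_neg_abs (x : ℝ) : (cosh x)⁻¹ ≤ 2 * exp (-|x|) := by
  rw [Real.exp_neg, ← div_eq_mul_inv, ← inv_div]
  gcongr
  rw [← Real.cosh_abs, Real.cosh_eq]
  gcongr
  linarith [Real.exp_pos (-|x|)]

lemma inv_cosh_isBigO_rpow_cocompact (b : ℝ) :
    (fun x : ℝ ↦ (cosh x)⁻¹) =O[cocompact ℝ] (|·| ^ b) := by
  have hexp : (fun x : ℝ ↦ exp (-1 * |x|)) =O[cocompact ℝ] (|·| ^ b) :=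
    (isLittleO_exp_neg_mul_rpow_atTop one_pos b).isBigO.comp_tendsto
      (tendsto_norm_cocompact_atTop (E := ℝ))
  refine .trans (.of_bound 2 (.of_forall fun x ↦ ?_)) hexp
  rw [Real.norm_of_nonneg (inv_nonneg.2 (Real.cosh_pos x).le), Real.norm_of_nonneg (by positivity),
    neg_one_mul]
  exact inv_cosh_le_two_mul_exp_neg_abs x

lemma betaIntegral_eq_integral_sigmoid (a b : ℂ) :
    Complex.betaIntegral a b =
      ∫ v : ℝ, (sigmoid v : ℂ) ^ a * (sigmoid (-v) : ℂ) ^ b := by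
  rw [Complex.betaIntegral, intervalIntegral.integral_of_le zero_le_one,
    integral_Ioc_eq_integral_Ioo, ← Real.range_sigmoid, ← Set.image_univ,
    integral_image_eq_integral_abs_deriv_smul MeasurableSet.univ
      (fun v _ ↦ (Real.hasDerivAt_sigmoid v).hasDerivWithinAt)
      Real.sigmoid_injective.injOn, setIntegral_univ]
  congr with v
  have hpos : (sigmoid v : ℂ) ≠ 0 := mod_cast (Real.sigmoid_pos v).ne'
  have hneg : (sigmoid (-v) : ℂ) ≠ 0 := mod_cast (Real.sigmoid_pos (-v)).ne'
  rw [← Complex.ofReal_one, ← Complex.ofReal_sub, ← Real.sigmoid_neg,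
    abs_of_pos (mul_pos (Real.sigmoid_pos _) (Real.sigmoid_pos _)), Complex.real_smul,
    Complex.ofReal_one, Complex.cpow_sub _ _ hpos, Complex.cpow_sub _ _ hneg, Complex.cpow_one,
    Complex.cpow_one, Complex.ofReal_mul]
  field_simp

lemma sigmoid_two_mul_eq_exp (v : ℝ) :
    sigmoid (2 * v) = exp (v - log (2 * cosh v)) := by
  rw [Real.exp_sub, Real.exp_log (by positivity), Real.cosh_eq, Real.sigmoid_def, ← one_div,
    div_eq_div_iff (by positivity) (by positivity), mul_add, ← Real.exp_add]
  ring_nf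

lemma sigmoid_two_mul_cpow_mul_sigmoid_neg_cpow (z : ℂ) (v : ℝ) :
    (sigmoid (2 * v) : ℂ) ^ ((1 + z) / 2) * (sigmoid (-(2 * v)) : ℂ) ^ ((1 - z) / 2) =
      Complex.exp (z * v) * ((2 * cosh v)⁻¹ : ℝ) := by
  have hcpow (r : ℝ) (w : ℂ) : (exp r : ℂ) ^ w = Complex.exp (r * w) := by
    rw [Complex.cpow_def_of_ne_zero (mod_cast (Real.exp_pos r).ne'), ← Complex.ofReal_log
      (Real.exp_pos r).le, Real.log_exp]
  have hinv : (2 * cosh v)⁻¹ = exp (-log (2 * cosh v)) := by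
    rw [Real.exp_neg, Real.exp_log (by positivity)]
  rw [← mul_neg, sigmoid_two_mul_eq_exp, sigmoid_two_mul_eq_exp, Real.cosh_neg, hcpow, hcpow, hinv,
    Complex.ofReal_exp, ← Complex.exp_add, ← Complex.exp_add]
  push_cast
  ring_nf

lemma betaIntegral_eq_pi_div_cos {z : ℂ} (hz : |z.re| < 1) :
    Complex.betaIntegral ((1 + z) / 2) ((1 - z) / 2) = π / Complex.cos (π * z / 2) := by
  obtain ⟨hlower, hupper⟩ := abs_lt.1 hz
  have hgamma := Complex.Gamma_mul_Gamma_eq_betaIntegral (s := (1 + z) / 2) (t := (1 - z) / 2)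
    (by simp; linarith) (by simp; linarith)
  have hreflection := Complex.Gamma_mul_Gamma_one_sub ((1 + z) / 2)
  rw [show (1 + z) / 2 + (1 - z) / 2 = 1 by ring, Complex.Gamma_one, one_mul] at hgamma
  rw [show 1 - (1 + z) / 2 = (1 - z) / 2 by ring, hgamma,
    show π * ((1 + z) / 2) = π * z / 2 + π / 2 by ring, Complex.sin_add_pi_div_two] at hreflection
  exact hreflection

lemma integral_exp_mul_inv_cosh {z : ℂ} (hz : |z.re| < 1) :
    ∫ v : ℝ, Complex.exp (z * v) * ((cosh v)⁻¹ : ℝ) = π / Complex.cos (π * z / 2) := by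
  have hdouble := Measure.integral_comp_mul_left (fun v : ℝ ↦
    (sigmoid v : ℂ) ^ ((1 + z) / 2) * (sigmoid (-v) : ℂ) ^ ((1 - z) / 2)) 2
  simp_rw [sigmoid_two_mul_cpow_mul_sigmoid_neg_cpow] at hdouble
  rw [← betaIntegral_eq_integral_sigmoid, betaIntegral_eq_pi_div_cos hz] at hdouble
  calc ∫ v : ℝ, Complex.exp (z * v) * ((cosh v)⁻¹ : ℝ)
      = 2 * ∫ v : ℝ, Complex.exp (z * v) * ((2 * cosh v)⁻¹ : ℝ) := by
        rw [← integral_const_mul]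
        congr with v
        push_cast
        ring
    _ = π / Complex.cos (π * z / 2) := by
        rw [hdouble, abs_of_pos (by norm_num), Complex.real_smul]
        push_cast
        ring

lemma fourier_inv_cosh (w : ℝ) :
    𝓕 (fun v : ℝ ↦ (((cosh v)⁻¹ : ℝ) : ℂ)) w = (π * (cosh (π ^ 2 * w))⁻¹ : ℝ) := by
  have hre : |(-2 * π * w * Complex.I : ℂ).re| < 1 := by simp
  have hcos : Complex.cos (π * (-2 * π * w * Complex.I) / 2) = cosh (π ^ 2 * w) := by
    rw [Complex.ofReal_cosh, ← Complex.cos_mul_I, ← Complex.cos_neg]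
    push_cast
    ring_nf
  calc 𝓕 (fun v : ℝ ↦ (((cosh v)⁻¹ : ℝ) : ℂ)) w
      = ∫ v : ℝ, Complex.exp (-2 * π * w * Complex.I * v) * ((cosh v)⁻¹ : ℝ) := by
        rw [Real.fourier_real_eq_integral_exp_smul]
        congr! 3 with v
        push_cast
        ring_nf
    _ = π / cosh (π ^ 2 * w) := by rw [integral_exp_mul_inv_cosh hre, hcos]
    _ = (π * (cosh (π ^ 2 * w))⁻¹ : ℝ) := by push_cast; rfl

lemma abs_mul_tsum_inv_cosh_sub_pi_le {h : ℝ} (hh : 0 < h) (t : ℝ) :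
    |h * ∑' k : ℤ, (cosh (h * (t + k)))⁻¹ - π| ≤ 4 * π / (exp (π ^ 2 / h) - 1) := by
  have hcont : Continuous fun v : ℝ ↦ (((cosh v)⁻¹ : ℝ) : ℂ) :=
    Complex.continuous_ofReal.comp
      (Real.continuous_cosh.inv₀ fun v ↦ (Real.cosh_pos v).ne')
  have hdecay : (fun v : ℝ ↦ (((cosh v)⁻¹ : ℝ) : ℂ)) =O[cocompact ℝ] (|·| ^ (-2 : ℝ)) :=
    Complex.isBigO_ofReal_left.2 (inv_cosh_isBigO_rpow_cocompact _)
  have hF (w : ℝ) : ‖𝓕 (fun v : ℝ ↦ (((cosh v)⁻¹ : ℝ) : ℂ)) w‖ ≤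
      2 * π * exp (-(π ^ 2 * |w|)) := by
    rw [fourier_inv_cosh, Complex.norm_of_nonneg (by positivity)]
    calc π * (cosh (π ^ 2 * w))⁻¹ ≤ π * (2 * exp (-|π ^ 2 * w|)) := by
          gcongr
          exact inv_cosh_le_two_mul_exp_neg_abs _
      _ = 2 * π * exp (-(π ^ 2 * |w|)) := by
          rw [abs_mul, abs_of_pos (by positivity : 0 < π ^ 2)]
          ring
  have hintegral : ∫ v : ℝ, (((cosh v)⁻¹ : ℝ) : ℂ) = π := by
    simpa using integral_exp_mul_inv_cosh (z := 0) (by simp)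
  have htrap := norm_mul_tsum_sub_integral_le hcont one_lt_two hdecay (by positivity) hF hh t
  rw [hintegral, ← Complex.ofReal_tsum, ← Complex.ofReal_mul, ← Complex.ofReal_sub,
    Complex.norm_real, Real.norm_eq_abs] at htrap
  exact htrap.trans_eq (by ring)

end Sech

section SqrtQuadrature

/-- The integrand of `√x = (2 / π) ∫ s, x * e ^ s / (x + e ^ (2 * s))`, which is
`(2 / π) ∫ u in Ioi 0, x / (x + u ^ 2)` after the substitution `u = e ^ s`. -/
noncomputable def sqrtIntegrand (x s : ℝ) : ℝ := x * exp s / (x + exp (2 * s))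

lemma sqrtIntegrand_zero_left (s : ℝ) : sqrtIntegrand 0 s = 0 := by simp [sqrtIntegrand]

lemma sqrtIntegrand_nonneg {x : ℝ} (hx : 0 ≤ x) (s : ℝ) : 0 ≤ sqrtIntegrand x s := by
  unfold sqrtIntegrand
  positivity

lemma sqrtIntegrand_le_exp_neg_abs {x : ℝ} (hx : x ∈ Set.Icc 0 1) (s : ℝ) :
    sqrtIntegrand x s ≤ exp (-|s|) := by
  have hden : 0 < x + exp (2 * s) := add_pos_of_nonneg_of_pos hx.1 (Real.exp_pos _)
  have hle_exp : sqrtIntegrand x s ≤ exp s := by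
    rw [sqrtIntegrand, div_le_iff₀ hden, mul_comm x]
    gcongr
    linarith [Real.exp_pos (2 * s)]
  have hle_exp_neg : sqrtIntegrand x s ≤ exp (-s) := by
    rw [sqrtIntegrand, div_le_iff₀ hden]
    calc x * exp s ≤ 1 * exp s := by gcongr; exact hx.2
      _ = exp (-s) * exp (2 * s) := by rw [← Real.exp_add]; ring_nf
      _ ≤ exp (-s) * (x + exp (2 * s)) := by gcongr; linarith [hx.1]
  rcases abs_choice s with hs | hs <;> rw [hs]
  · exact hle_exp_neg
  · rwa [neg_neg]

lemma sqrtIntegrand_eq_inv_cosh {x : ℝ} (hx : 0 < x) (s : ℝ) :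
    sqrtIntegrand x s = √x / 2 * (cosh (s - log √x))⁻¹ := by
  have hsqrt : 0 < √x := Real.sqrt_pos.2 hx
  have hsq : exp (2 * s) = exp s ^ 2 := by rw [← Real.exp_nat_mul]; norm_num
  rw [sqrtIntegrand, Real.cosh_eq, neg_sub, Real.exp_sub, Real.exp_sub, Real.exp_log hsqrt, hsq]
  nth_rw 1 2 [← Real.sq_sqrt hx.le]
  field_simp
  ring

lemma abs_mul_tsum_sqrtIntegrand_sub_le {h x : ℝ} (hh : 0 < h) (hx : 0 ≤ x) (t : ℝ) :
    |h * ∑' k : ℤ, sqrtIntegrand x (h * (t + k)) - π / 2 * √x| ≤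
      2 * π * √x / (exp (π ^ 2 / h) - 1) := by
  rcases hx.eq_or_lt with rfl | hx
  · simp [sqrtIntegrand_zero_left]
  have hterm (k : ℤ) : sqrtIntegrand x (h * (t + k)) =
      √x / 2 * (cosh (h * (t - log √x / h + k)))⁻¹ := by
    rw [sqrtIntegrand_eq_inv_cosh hx]
    congr 3
    field_simp
    ring
  simp_rw [hterm, tsum_mul_left]
  set S := ∑' k : ℤ, (cosh (h * (t - log √x / h + k)))⁻¹
  calc |h * (√x / 2 * S) - π / 2 * √x| = |√x / 2 * (h * S - π)| := by ring_nf
    _ = √x / 2 * |h * S - π| := by rw [abs_mul, abs_of_nonneg (by positivity)]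
    _ ≤ √x / 2 * (4 * π / (exp (π ^ 2 / h) - 1)) := by
        gcongr
        exact abs_mul_tsum_inv_cosh_sub_pi_le hh _
    _ = 2 * π * √x / (exp (π ^ 2 / h) - 1) := by ring

/-- The trapezoidal rule for `√x = (2 / π) ∫ s, sqrtIntegrand x s` with step `h`, truncated to `n`
nodes placed symmetrically about `0`. -/
noncomputable def sqrtTrapezoid (h : ℝ) (n : ℕ) (x : ℝ) : ℝ :=
  2 / π * (h * ∑ k ∈ Finset.range n, sqrtIntegrand x (h * (-((n - 1) / 2) + k)))

lemma mul_exp_neg_half_le_one_sub_exp_neg {h : ℝ} (hh : 0 ≤ h) :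
    h * exp (-(h / 2)) ≤ 1 - exp (-h) := by
  have hsinh : h / 2 ≤ sinh (h / 2) := Real.self_le_sinh_iff.2 (by positivity)
  calc h * exp (-(h / 2)) ≤ 2 * sinh (h / 2) * exp (-(h / 2)) := by
        gcongr
        linarith
    _ = exp (h / 2 + -(h / 2)) - exp (-(h / 2) + -(h / 2)) := by
        rw [Real.sinh_eq, Real.exp_add, Real.exp_add]
        ring
    _ = 1 - exp (-h) := by rw [add_neg_cancel, Real.exp_zero, ← neg_add, add_halves]

lemma mul_abs_tsum_sub_sum_sqrtIntegrand_le {h x : ℝ} (hh : 0 < h) (n : ℕ)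
    (hx : x ∈ Set.Icc 0 1) :
    h * |∑' k : ℤ, sqrtIntegrand x (h * (-((n - 1) / 2) + k)) -
      ∑ k ∈ Finset.range n, sqrtIntegrand x (h * (-((n - 1) / 2) + k))| ≤
      2 * exp (-(h * n / 2)) := by
  let f : ℤ → ℝ := fun k ↦ sqrtIntegrand x (h * (-((n - 1) / 2) + k))
  have hgeom (k : ℤ) (j : ℕ) (hk : |-((n - 1) / 2) + (k : ℝ)| = j + (n + 1) / 2) :
      ‖f k‖ ≤ exp (-(h * (n + 1) / 2)) * exp (-h) ^ j := by
    rw [Real.norm_of_nonneg (sqrtIntegrand_nonneg hx.1 _)]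
    refine (sqrtIntegrand_le_exp_neg_abs hx _).trans_eq ?_
    rw [abs_mul, abs_of_pos hh, hk, ← Real.exp_nat_mul, ← Real.exp_add]
    ring_nf
  have hpos (j : ℕ) : ‖f (j + n : ℕ)‖ ≤ exp (-(h * (n + 1) / 2)) * exp (-h) ^ j :=
    hgeom _ j <|
      (abs_eq (by positivity)).2 (.inl (by push_cast; ring))
  have hneg (j : ℕ) : ‖f (-(j + 1))‖ ≤ exp (-(h * (n + 1) / 2)) * exp (-h) ^ j :=
    hgeom _ j <|
      (abs_eq (by positivity)).2 (.inr (by push_cast; ring))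
  have htail := norm_tsum_int_sub_sum_range_le (Real.exp_pos _).le
    (Real.exp_lt_one_iff.2 (neg_neg_of_pos hh)) hpos hneg
  have hone_sub : 0 < 1 - exp (-h) :=
    sub_pos.2 (Real.exp_lt_one_iff.2 (neg_neg_of_pos hh))
  calc h * |∑' k : ℤ, f k - ∑ k ∈ Finset.range n, f k|
      ≤ h * (2 * exp (-(h * (n + 1) / 2)) / (1 - exp (-h))) := by gcongr; exact htail
    _ = 2 * exp (-(h * n / 2)) * (h * exp (-(h / 2)) / (1 - exp (-h))) := by
        rw [show -(h * (n + 1) / 2) = -(h * n / 2) + -(h / 2) by ring, Real.exp_add]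
        ring
    _ ≤ 2 * exp (-(h * n / 2)) * 1 := by
        gcongr
        exact (div_le_one hone_sub).2 (mul_exp_neg_half_le_one_sub_exp_neg hh.le)
    _ = 2 * exp (-(h * n / 2)) := mul_one _

lemma abs_sqrt_sub_sqrtTrapezoid_le {h x : ℝ} (hh : 0 < h) (n : ℕ) (hx : x ∈ Set.Icc 0 1) :
    |√x - sqrtTrapezoid h n x| ≤
      4 / (exp (π ^ 2 / h) - 1) + 4 / π * exp (-(h * n / 2)) := by
  have hdiscretization := abs_mul_tsum_sqrtIntegrand_sub_le hh hx.1 (-((n - 1) / 2))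
  have htruncation := mul_abs_tsum_sub_sum_sqrtIntegrand_le hh n hx
  have hexp : 0 < exp (π ^ 2 / h) - 1 := sub_pos.2 (Real.one_lt_exp_iff.2 (by positivity))
  unfold sqrtTrapezoid
  set T := ∑' k : ℤ, sqrtIntegrand x (h * (-((n - 1) / 2) + k))
  set P := ∑ k ∈ Finset.range n, sqrtIntegrand x (h * (-((n - 1) / 2) + k))
  calc |√x - 2 / π * (h * P)| = |2 / π * (h * (T - P) - (h * T - π / 2 * √x))| := by
        congr 1
        field_simp
        ring
    _ ≤ 2 / π * (|h * (T - P)| + |h * T - π / 2 * √x|) := by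
        rw [abs_mul, abs_of_pos (by positivity : 0 < 2 / π)]
        gcongr
        exact abs_sub _ _
    _ ≤ 2 / π * (2 * exp (-(h * n / 2)) + 2 * π * 1 / (exp (π ^ 2 / h) - 1)) := by
        rw [abs_mul, abs_of_pos hh]
        gcongr
        refine hdiscretization.trans ?_
        gcongr
        exact Real.sqrt_le_one.2 hx.2
    _ = 4 / (exp (π ^ 2 / h) - 1) + 4 / π * exp (-(h * n / 2)) := by
        field_simp
        ring

lemma four_div_exp_sub_one_add_le_exp_neg_half {r : ℝ} (hr : 1 ≤ r) :
    4 / (exp (π * r) - 1) + 4 / π * exp (-(π * r / 2)) ≤ exp (-(r / 2)) := by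
  set u := exp (-(r / 2)) with hu
  set v := exp (-(π * r / 2)) with hv
  have hu0 : 0 < u := Real.exp_pos _
  have hv0 : 0 < v := Real.exp_pos _
  have hu_le : u ≤ 5 / 8 := by
    have hquad := Real.quadratic_le_exp_of_nonneg (x := 1 / 2) (by norm_num)
    calc u ≤ exp (-(1 / 2)) := Real.exp_le_exp.2 (by linarith)
      _ = (exp (1 / 2))⁻¹ := Real.exp_neg _
      _ ≤ (8 / 5)⁻¹ := by gcongr; linarith
      _ = 5 / 8 := by norm_num
  have hv_le : v ≤ u ^ 3 := by
    rw [hu, hv, ← Real.exp_nat_mul, Real.exp_le_exp]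
    push_cast
    nlinarith [Real.pi_gt_three]
  have hv_le_u : v ≤ 25 / 64 * u :=
    calc v ≤ u ^ 2 * u := by rwa [← pow_succ]
      _ ≤ (5 / 8) ^ 2 * u :=
        mul_le_mul_of_nonneg_right (pow_le_pow_left₀ hu0.le hu_le 2) hu0.le
      _ = 25 / 64 * u := by norm_num
  have hexp : exp (π * r) = (v ^ 2)⁻¹ := by
    rw [hv, ← Real.exp_nat_mul, ← Real.exp_neg]
    push_cast
    ring_nf
  have hv_sq : v ^ 2 ≤ 1 / 4 * v := by
    rw [sq]
    gcongr
    linarith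
  have hdiscretization : 4 / (exp (π * r) - 1) ≤ 64 / 15 * v ^ 2 := by
    have hsub : 15 / 16 ≤ 1 - v ^ 2 := by linarith
    calc 4 / (exp (π * r) - 1) = 4 * v ^ 2 / (1 - v ^ 2) := by rw [hexp]; field_simp
      _ ≤ 4 * v ^ 2 / (15 / 16) := by gcongr
      _ = 64 / 15 * v ^ 2 := by ring
  have htruncation : 4 / π * v ≤ 4 / 3 * v := by gcongr; exact Real.pi_gt_three.le
  linarith

lemma exists_partialFraction_eq_sum (n : ℕ) (w p : ℕ → ℝ) (hp : ∀ i, 0 < p i) :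
    ∃ a ε : ℕ → ℝ, (∀ k ∈ Finset.Icc 1 n, 0 < ε k) ∧ ∀ x, 0 ≤ x →
      a 0 + ∑ k ∈ Finset.Icc 1 n, a k / (1 + x / ε k) =
        ∑ i ∈ Finset.range n, w i * x / (x + p i) := by
  let a : ℕ → ℝ
    | 0 => ∑ i ∈ Finset.range n, w i
    | i + 1 => -w i
  -- Each term is rewritten using `x / (x + p) = 1 - 1 / (1 + x / p)`.
  refine ⟨a, fun k ↦ p (k - 1), fun k _ ↦ hp _, fun x hx ↦ ?_⟩
  rw [Finset.range_eq_Ico, ← Finset.Ico_add_one_right_eq_Icc, ← zero_add 1, ← Finset.sum_Ico_add',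
    ← Finset.range_eq_Ico, ← Finset.sum_add_distrib]
  refine Finset.sum_congr rfl fun i _ ↦ ?_
  have hpi := hp i
  simp only [a, Nat.add_sub_cancel]
  field_simp
  ring

lemma exists_partialFraction_eq_sqrtTrapezoid (h : ℝ) (n : ℕ) :
    ∃ a ε : ℕ → ℝ, (∀ k ∈ Finset.Icc 1 n, 0 < ε k) ∧ ∀ x, 0 ≤ x →
      a 0 + ∑ k ∈ Finset.Icc 1 n, a k / (1 + x / ε k) = sqrtTrapezoid h n x := by
  let s : ℕ → ℝ := fun i ↦ h * (-((n - 1) / 2) + i)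
  obtain ⟨a, ε, hε, hsum⟩ := exists_partialFraction_eq_sum n
    (fun i ↦ 2 / π * h * exp (s i)) (fun i ↦ exp (2 * s i)) fun _ ↦ Real.exp_pos _
  refine ⟨a, ε, hε, fun x hx ↦ ?_⟩
  rw [hsum x hx, sqrtTrapezoid, ← mul_assoc, Finset.mul_sum]
  refine Finset.sum_congr rfl fun i _ ↦ ?_
  rw [sqrtIntegrand]
  ring

end SqrtQuadrature

/-- Newman's theorem (1964): `√x` on `[0,1]` admits root-exponentially convergent
approximations by degree-`n` rational functions in partial fraction form with
poles `-ε_k` on the negative real axis. -/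
theorem newman_sqrt_rational_approx :
    ∃ C : ℝ, 0 < C ∧ ∀ n : ℕ, 1 ≤ n →
      ∃ (a : ℕ → ℝ) (ε : ℕ → ℝ),
        (∀ k ∈ Finset.Icc 1 n, 0 < ε k) ∧
        ∀ x ∈ Set.Icc (0 : ℝ) 1,
          |Real.sqrt x - (a 0 + ∑ k ∈ Finset.Icc 1 n, a k / (1 + x / ε k))| ≤
            Real.exp (-C * Real.sqrt n) := by
  refine ⟨1 / 2, one_half_pos, fun n hn ↦ ?_⟩
  obtain ⟨a, ε, hε, ha⟩ := exists_partialFraction_eq_sqrtTrapezoid (π / √n) n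
  refine ⟨a, ε, hε, fun x hx ↦ ?_⟩
  have hsqrt : 1 ≤ √(n : ℝ) := Real.one_le_sqrt.2 (mod_cast hn)
  have hstep : 0 < π / √n := by positivity
  have hdiscretization : π ^ 2 / (π / √n) = π * √n := by field_simp
  have htruncation : π / √n * n / 2 = π * √n / 2 := by
    rw [div_mul_eq_mul_div, mul_div_assoc, Real.div_sqrt]
  calc |√x - (a 0 + ∑ k ∈ Finset.Icc 1 n, a k / (1 + x / ε k))|
      = |√x - sqrtTrapezoid (π / √n) n x| := by rw [ha x hx.1]
    _ ≤ 4 / (exp (π * √n) - 1) + 4 / π * exp (-(π * √n / 2)) := by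
        simpa only [hdiscretization, htruncation] using abs_sqrt_sub_sqrtTrapezoid_le hstep n hx
    _ ≤ exp (-(√n / 2)) := four_div_exp_sub_one_add_le_exp_neg_half hsqrt
    _ = exp (-(1 / 2) * √n) := by ring_nf
end

section
/- There exists a constant C > 0 such that for every integer n ≥ 1 there exist real coefficients a_0, a_1, …, a_n and real shift parameters s_1, …, s_n such that for all s ∈ (−∞, 0], |e^{s/2} − (a_0 + Σ_{k=1}^n a_k/(1 + e^{s − s_k}))| ≤ exp(−C·√n). That is, the smooth function F(s) = e^{s/2} on (−∞,0] admits root-exponentially convergent approximation by a constant plus linear combinations of n translates of the logistic sigmoid function. -/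
/-!
Put `x = exp s`, so that `exp (p * s) = x * x ^ (p - 1)`, where `x ^ (p - 1) = ∫ (x + t)⁻¹ ∂μ t` is
a Stieltjes transform. For distinct poles `-ε i < 0` let `B x = ∏ i, (x - ε i) / (x + ε i)`. The
kernel `(1 - B x * B t) / (x + t)` is a finite sum of products `φ x * φ t` whose factors `φ` are
combinations of the `(x + ε i)⁻¹`; integrating it in `t` gives a combination of the `(x + ε i)⁻¹`
which misses the transform by `B x * ∫ B t / (x + t) ∂μ t`, at most `|B x|` times the transform.
As `x / (x + ε)` is one minus a logistic sigmoid in `s`, it remains to make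
`|B (exp s)| * exp (p * s)` small. Take `ε i = exp (-(i + 1) / m)` with `m = ⌊√n⌋`. Where
`-m < s ≤ 0`, at least `m` of the `log ε i` are at distance at most `1` from `s`, and each
contributes a factor at most `exp (-1 / 2)` to `|B|`; where `s ≤ -m`, already
`exp (p * s) ≤ exp (-p * m)`.
-/

open MeasureTheory Finset

section RationalIdentities

variable {K : Type*} [Field K]

/-- The Blaschke product of the right half-plane with real zeros `ε 0, …, ε (n - 1)`, as a rational
function with poles `-ε i`. -/
def blaschkeProd (ε : ℕ → K) (n : ℕ) (x : K) : K :=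
  ∏ i ∈ range n, (x - ε i) / (x + ε i)

/-- The (unnormalised) Takenaka–Malmquist system attached to the zeros `ε`; for distinct zeros, a
basis of the span of the simple poles `1 / (x + ε i)`, in which the kernel
`(1 - B x * B t) / (x + t)` of a Blaschke product `B` is diagonal. -/
def malmquist (ε : ℕ → K) (k : ℕ) (x : K) : K :=
  blaschkeProd ε k x / (x + ε k)

lemma blaschkeProd_succ (ε : ℕ → K) (n : ℕ) (x : K) :
    blaschkeProd ε (n + 1) x = blaschkeProd ε n x * ((x - ε n) / (x + ε n)) :=
  prod_range_succ _ n

/-- A Christoffel–Darboux formula: each factor of the Blaschke product contributes one term. -/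
lemma one_sub_blaschkeProd_mul (ε : ℕ → K) (n : ℕ) {x t : K}
    (hx : ∀ i < n, x + ε i ≠ 0) (ht : ∀ i < n, t + ε i ≠ 0) :
    1 - blaschkeProd ε n x * blaschkeProd ε n t =
      (x + t) * ∑ k ∈ range n, 2 * ε k * malmquist ε k t * malmquist ε k x := by
  induction n with
  | zero => simp [blaschkeProd]
  | succ n ih =>
    have hxn := hx n n.lt_succ_self
    have htn := ht n n.lt_succ_self
    have hfactor : 1 - (x - ε n) / (x + ε n) * ((t - ε n) / (t + ε n)) =
        (x + t) * (2 * ε n / ((t + ε n) * (x + ε n))) := by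
      field_simp
      ring
    calc 1 - blaschkeProd ε (n + 1) x * blaschkeProd ε (n + 1) t
        = (1 - blaschkeProd ε n x * blaschkeProd ε n t) +
            blaschkeProd ε n x * blaschkeProd ε n t *
              (1 - (x - ε n) / (x + ε n) * ((t - ε n) / (t + ε n))) := by
          rw [blaschkeProd_succ, blaschkeProd_succ]
          ring
      _ = (x + t) * ∑ k ∈ range (n + 1), 2 * ε k * malmquist ε k t * malmquist ε k x := by
          rw [hfactor, ih (fun i hi => hx i (by omega)) (fun i hi => ht i (by omega)),
            sum_range_succ, malmquist, malmquist]
          field_simp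

lemma exists_eval_div_eval_nodal_eq_sum_div {ι : Type*} {s : Finset ι} {v : ι → K}
    (hv : Set.InjOn v s) {P : Polynomial K} (hP : P.degree < #s) :
    ∃ c : ι → K, ∀ x, (∀ i ∈ s, x ≠ v i) →
      P.eval x / (Lagrange.nodal s v).eval x = ∑ i ∈ s, c i / (x - v i) := by
  classical
  refine ⟨fun i => Lagrange.nodalWeight s v i * P.eval (v i), fun x hx => ?_⟩
  rw [div_eq_iff (Lagrange.eval_nodal_not_at_node hx), mul_comm]
  conv_lhs => rw [Lagrange.eq_interpolate hv hP, Lagrange.eval_interpolate_not_at_node _ hx]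
  exact congrArg _ (sum_congr rfl fun i _ => by ring)

lemma exists_malmquist_eq_sum_div {ε : ℕ → K} (hε : Function.Injective ε) (k : ℕ) :
    ∃ c : ℕ → K, ∀ x, (∀ i < k + 1, x + ε i ≠ 0) →
      malmquist ε k x = ∑ i ∈ range (k + 1), c i / (x + ε i) := by
  obtain ⟨c, hc⟩ := exists_eval_div_eval_nodal_eq_sum_div (s := range (k + 1)) (v := fun i => -ε i)
    (P := Lagrange.nodal (range k) ε) (neg_injective.comp hε).injOn
    (by rw [Lagrange.degree_nodal, card_range, card_range]; exact_mod_cast k.lt_succ_self)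
  refine ⟨c, fun x hx => ?_⟩
  have hne : ∀ i ∈ range (k + 1), x ≠ -ε i := fun i hi h =>
    hx i (mem_range.1 hi) (by rw [h, neg_add_cancel])
  simpa only [malmquist, blaschkeProd, Lagrange.eval_nodal, sub_neg_eq_add, prod_range_succ _ k,
    prod_div_distrib, div_div] using hc x hne

lemma exists_sum_malmquist_eq_sum_div {ε : ℕ → K} (hε : Function.Injective ε) (A : ℕ → K) (n : ℕ) :
    ∃ a : ℕ → K, ∀ x, (∀ i < n, x + ε i ≠ 0) →
      ∑ k ∈ range n, A k * malmquist ε k x = ∑ i ∈ range n, a i / (x + ε i) := by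
  choose c hc using exists_malmquist_eq_sum_div hε
  refine ⟨fun i => ∑ k ∈ Ico i n, A k * c k i, fun x hx => ?_⟩
  calc ∑ k ∈ range n, A k * malmquist ε k x
      = ∑ k ∈ range n, ∑ i ∈ range (k + 1), A k * c k i / (x + ε i) := by
        refine sum_congr rfl fun k hk => ?_
        rw [hc k x fun i hi => hx i (by have := mem_range.1 hk; omega), mul_sum]
        exact sum_congr rfl fun i _ => mul_div_assoc' _ _ _
    _ = ∑ i ∈ range n, ∑ k ∈ Ico i n, A k * c k i / (x + ε i) :=
        sum_comm' fun k i => by simp only [mem_range, mem_Ico]; omega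
    _ = ∑ i ∈ range n, (∑ k ∈ Ico i n, A k * c k i) / (x + ε i) := by simp only [sum_div]

end RationalIdentities

section RealBlaschkeProd

lemma abs_sub_div_add_le_one {e x : ℝ} (he : 0 < e) (hx : 0 ≤ x) : |(x - e) / (x + e)| ≤ 1 := by
  rw [abs_div, abs_of_pos (by positivity : 0 < x + e), div_le_one (by positivity), abs_le]
  constructor <;> linarith

lemma abs_blaschkeProd_le_one {ε : ℕ → ℝ} (hε : ∀ i, 0 < ε i) (n : ℕ) {x : ℝ} (hx : 0 ≤ x) :
    |blaschkeProd ε n x| ≤ 1 := by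
  rw [blaschkeProd, abs_prod]
  exact prod_le_one (fun _ _ => abs_nonneg _) fun i _ => abs_sub_div_add_le_one (hε i) hx

lemma measurable_blaschkeProd (ε : ℕ → ℝ) (n : ℕ) : Measurable (blaschkeProd ε n) :=
  Finset.measurable_fun_prod _ fun i _ => by fun_prop

lemma abs_exp_sub_exp_div_add_le {s t : ℝ} (h : |s - t| ≤ 1) :
    |(Real.exp s - Real.exp t) / (Real.exp s + Real.exp t)| ≤ Real.exp (-(1 / 2)) := by
  have exp_le_three_mul : ∀ {u v : ℝ}, u - v ≤ 1 → Real.exp u ≤ 3 * Real.exp v := fun {u v} huv =>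
    calc Real.exp u ≤ Real.exp (1 + v) := Real.exp_le_exp.2 (by linarith)
      _ = Real.exp 1 * Real.exp v := Real.exp_add 1 v
      _ ≤ 3 * Real.exp v := by gcongr; exact Real.exp_one_lt_three.le
  have hst := exp_le_three_mul (abs_le.1 h).2
  have hts : Real.exp t ≤ 3 * Real.exp s := exp_le_three_mul (by linarith [(abs_le.1 h).1])
  calc |(Real.exp s - Real.exp t) / (Real.exp s + Real.exp t)| ≤ 1 / 2 := by
        have hpos : 0 < Real.exp s + Real.exp t := by positivity
        rw [abs_div, abs_of_pos hpos, div_le_iff₀ hpos, abs_le]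
        constructor <;> linarith
    _ = -(1 / 2) + 1 := by norm_num
    _ ≤ Real.exp (-(1 / 2)) := Real.add_one_le_exp _

lemma abs_blaschkeProd_exp_le {u : ℕ → ℝ} {n : ℕ} {s : ℝ} {T : Finset ℕ} (hT : T ⊆ range n)
    (h : ∀ i ∈ T, |s - u i| ≤ 1) :
    |blaschkeProd (fun i => Real.exp (u i)) n (Real.exp s)| ≤ Real.exp (-(#T / 2)) := by
  let F (i : ℕ) : ℝ := |(Real.exp s - Real.exp (u i)) / (Real.exp s + Real.exp (u i))|
  have hF : ∀ i, F i ≤ 1 := fun i => abs_sub_div_add_le_one (Real.exp_pos _) (Real.exp_pos s).le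
  calc |blaschkeProd (fun i => Real.exp (u i)) n (Real.exp s)| = ∏ i ∈ range n, F i := abs_prod _ _
    _ ≤ ∏ i ∈ T, F i := prod_anti_set_of_le_one (fun _ => abs_nonneg _) hF hT
    _ ≤ ∏ _i ∈ T, Real.exp (-(1 / 2)) :=
        prod_le_prod (fun _ _ => abs_nonneg _) fun i hi => abs_exp_sub_exp_div_add_le (h i hi)
    _ = Real.exp (-(#T / 2)) := by
        rw [prod_const, ← Real.exp_nat_mul]
        ring_nf

end RealBlaschkeProd

/-- `f` is the Stieltjes transform of the measure `μ` on the half-line `[0, ∞)`; the measure is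
allowed to live on `ℝ` so that no subtype is needed. -/
structure IsStieltjesTransform (f : ℝ → ℝ) (μ : Measure ℝ) : Prop where
  nonneg : ∀ᵐ t ∂μ, 0 ≤ t
  integrable : ∀ x, 0 < x → Integrable (fun t => (x + t)⁻¹) μ
  eq_integral : ∀ x, 0 < x → f x = ∫ t, (x + t)⁻¹ ∂μ

lemma exists_isStieltjesTransform_rpow_sub_one {p : ℝ} (hp : p ∈ Set.Ioo 0 1) :
    ∃ μ, IsStieltjesTransform (fun x => x ^ (p - 1)) μ := by
  obtain ⟨ν, hν⟩ := Real.exists_measure_rpow_eq_integral_rpowIntegrand₀₁ hp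
  let w (t : ℝ) : NNReal := (t ^ (p - 1)).toNNReal
  have hw : Measurable w := by fun_prop
  have hae : ∀ x, 0 < x → (fun t => w t • (x + t)⁻¹) =ᵐ[ν.restrict (Set.Ioi 0)]
      fun t => x⁻¹ * Real.rpowIntegrand₀₁ p t x := fun x hx => by
    filter_upwards [ae_restrict_mem measurableSet_Ioi] with t ht
    have ht : 0 < t := ht
    rw [Real.rpowIntegrand₀₁_eq_pow_div hp ht.le hx.le, NNReal.smul_def,
      Real.coe_toNNReal _ (by positivity), smul_eq_mul]
    field_simp
    ring
  refine ⟨(ν.restrict (Set.Ioi 0)).withDensity fun t => w t, ?_, fun x hx => ?_, fun x hx => ?_⟩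
  · exact (withDensity_absolutelyContinuous _ _).ae_le
      ((ae_restrict_mem measurableSet_Ioi).mono fun t ht => le_of_lt ht)
  · rw [integrable_withDensity_iff_integrable_smul hw, integrable_congr (hae x hx)]
    exact (hν x hx.le).1.const_mul _
  · rw [integral_withDensity_eq_integral_smul hw, integral_congr_ae (hae x hx),
      integral_const_mul, ← (hν x hx.le).2, Real.rpow_sub_one hx.ne', div_eq_inv_mul]

namespace IsStieltjesTransform

variable {f : ℝ → ℝ} {μ : Measure ℝ} {ε : ℕ → ℝ}

lemma integrable_blaschkeProd_mul (hf : IsStieltjesTransform f μ) (hε : ∀ i, 0 < ε i) (n : ℕ)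
    {x : ℝ} (hx : 0 < x) : Integrable (fun t => blaschkeProd ε n t * (x + t)⁻¹) μ :=
  (hf.integrable x hx).bdd_mul (c := 1)
    (measurable_blaschkeProd ε n).aestronglyMeasurable
    (hf.nonneg.mono fun _ ht => abs_blaschkeProd_le_one hε n ht)

lemma integrable_malmquist (hf : IsStieltjesTransform f μ) (hε : ∀ i, 0 < ε i) (k : ℕ) :
    Integrable (malmquist ε k) μ := by
  unfold malmquist
  simpa only [add_comm (ε k), ← div_eq_mul_inv] using hf.integrable_blaschkeProd_mul hε k (hε k)

lemma sub_sum_malmquist (hf : IsStieltjesTransform f μ) (hε : ∀ i, 0 < ε i) (n : ℕ)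
    {x : ℝ} (hx : 0 < x) :
    f x - ∑ k ∈ range n, 2 * ε k * (∫ t, malmquist ε k t ∂μ) * malmquist ε k x =
      blaschkeProd ε n x * ∫ t, blaschkeProd ε n t * (x + t)⁻¹ ∂μ := by
  have hkernel : ∀ᵐ t ∂μ,
      (x + t)⁻¹ - ∑ k ∈ range n, 2 * ε k * malmquist ε k t * malmquist ε k x =
        blaschkeProd ε n x * (blaschkeProd ε n t * (x + t)⁻¹) := by
    filter_upwards [hf.nonneg] with t ht
    have hxt : x + t ≠ 0 := by positivity
    have hCD := one_sub_blaschkeProd_mul ε n (fun i _ => (add_pos hx (hε i)).ne')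
      (fun i _ => (add_pos_of_nonneg_of_pos ht (hε i)).ne')
    field_simp
    linear_combination hCD
  have hterm : ∀ k ∈ range n,
      Integrable (fun t => 2 * ε k * malmquist ε k t * malmquist ε k x) μ := fun k _ =>
    ((hf.integrable_malmquist hε k).const_mul _).mul_const _
  rw [hf.eq_integral x hx, ← integral_const_mul, ← integral_congr_ae hkernel,
    integral_sub (hf.integrable x hx) (integrable_finsetSum _ hterm), integral_finsetSum _ hterm]
  simp only [integral_mul_const, integral_const_mul]

lemma abs_integral_blaschkeProd_mul_le (hf : IsStieltjesTransform f μ) (hε : ∀ i, 0 < ε i) (n : ℕ)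
    {x : ℝ} (hx : 0 < x) : |∫ t, blaschkeProd ε n t * (x + t)⁻¹ ∂μ| ≤ f x := by
  rw [hf.eq_integral x hx, ← Real.norm_eq_abs]
  refine norm_integral_le_of_norm_le (hf.integrable x hx) (hf.nonneg.mono fun t ht => ?_)
  have hxt : 0 ≤ (x + t)⁻¹ := by positivity
  rw [Real.norm_eq_abs, abs_mul, abs_of_nonneg hxt]
  exact mul_le_of_le_one_left hxt (abs_blaschkeProd_le_one hε n ht)

theorem exists_abs_sub_sum_div_le (hf : IsStieltjesTransform f μ) (hε : ∀ i, 0 < ε i)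
    (hinj : Function.Injective ε) (n : ℕ) :
    ∃ a : ℕ → ℝ, ∀ x, 0 < x →
      |f x - ∑ i ∈ range n, a i / (x + ε i)| ≤ |blaschkeProd ε n x| * f x := by
  obtain ⟨a, ha⟩ := exists_sum_malmquist_eq_sum_div hinj
    (fun k => 2 * ε k * ∫ t, malmquist ε k t ∂μ) n
  refine ⟨a, fun x hx => ?_⟩
  rw [← ha x fun i _ => (add_pos hx (hε i)).ne', hf.sub_sum_malmquist hε n hx, abs_mul]
  gcongr
  exact hf.abs_integral_blaschkeProd_mul_le hε n hx

theorem exists_sigmoid_approx (hf : IsStieltjesTransform f μ) {s' : ℕ → ℝ}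
    (hs' : Function.Injective s') (n : ℕ) :
    ∃ a : ℕ → ℝ, ∀ s : ℝ,
      |Real.exp s * f (Real.exp s) -
          (a 0 + ∑ k ∈ Icc 1 n, a k / (1 + Real.exp (s - s' k)))| ≤
        |blaschkeProd (fun i => Real.exp (s' (i + 1))) n (Real.exp s)| *
          (Real.exp s * f (Real.exp s)) := by
  obtain ⟨b, hb⟩ := hf.exists_abs_sub_sum_div_le (ε := fun i => Real.exp (s' (i + 1)))
    (fun i => Real.exp_pos _)
    (Real.exp_injective.comp (hs'.comp (add_left_injective 1))) n
  let a : ℕ → ℝ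
    | 0 => ∑ i ∈ range n, b i
    | k + 1 => -b k
  refine ⟨a, fun s => ?_⟩
  have hpole : ∀ i, b i + -b i / (1 + Real.exp (s - s' (i + 1))) =
      Real.exp s * (b i / (Real.exp s + Real.exp (s' (i + 1)))) := fun i => by
    rw [Real.exp_sub]
    field_simp
    ring
  have hshift : ∑ k ∈ Icc 1 n, a k / (1 + Real.exp (s - s' k)) =
      ∑ i ∈ range n, -b i / (1 + Real.exp (s - s' (i + 1))) := by
    rw [range_eq_Ico]
    exact (sum_Ico_add' (fun k => a k / (1 + Real.exp (s - s' k))) 0 n 1).symm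
  have hsum : a 0 + ∑ k ∈ Icc 1 n, a k / (1 + Real.exp (s - s' k)) =
      Real.exp s * ∑ i ∈ range n, b i / (Real.exp s + Real.exp (s' (i + 1))) := by
    rw [mul_sum, ← sum_congr rfl fun i _ => hpole i, sum_add_distrib, hshift]
  rw [hsum, ← mul_sub, abs_mul, abs_of_pos (Real.exp_pos s), mul_left_comm]
  gcongr
  exact hb _ (Real.exp_pos s)

end IsStieltjesTransform

lemma abs_blaschkeProd_exp_grid_le {m n : ℕ} (hmn : m * m ≤ n) {s : ℝ} (hs : s ≤ 0)
    (hms : -(m : ℝ) < s) :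
    |blaschkeProd (fun i => Real.exp (-((i + 1 : ℕ) / m))) n (Real.exp s)| ≤
      Real.exp (-(m / 2)) := by
  have hm : (0 : ℝ) < m := by linarith
  let L := ⌊-s⌋₊
  have hLs : (L : ℝ) ≤ -s := Nat.floor_le (by linarith)
  have hsL : -s < L + 1 := Nat.lt_floor_add_one _
  have hLm : L < m := Nat.cast_lt.1 (hLs.trans_lt (by linarith) : (L : ℝ) < m)
  have hsub : Ico (L * m) (L * m + m) ⊆ range n := fun i hi => by
    rw [mem_Ico] at hi
    rw [mem_range]
    nlinarith
  have hnear : ∀ i ∈ Ico (L * m) (L * m + m), |s - -(((i + 1 : ℕ) : ℝ) / m)| ≤ 1 := fun i hi => by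
    rw [mem_Ico] at hi
    have hlow : (L : ℝ) ≤ (i + 1 : ℕ) / m := by
      rw [le_div_iff₀ hm]
      exact_mod_cast hi.1.trans i.le_succ
    have hupp : ((i + 1 : ℕ) : ℝ) / m ≤ L + 1 := by
      rw [div_le_iff₀ hm, add_one_mul]
      exact_mod_cast hi.2
    rw [abs_le]
    constructor <;> linarith
  simpa using abs_blaschkeProd_exp_le hsub hnear

lemma abs_blaschkeProd_exp_grid_mul_exp_le {p : ℝ} (hp : p ∈ Set.Icc 0 1) {m n : ℕ}
    (hmn : m * m ≤ n) {s : ℝ} (hs : s ≤ 0) :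
    |blaschkeProd (fun i => Real.exp (-((i + 1 : ℕ) / m))) n (Real.exp s)| * Real.exp (p * s) ≤
      Real.exp (-(p * m / 2)) := by
  obtain ⟨hp0, hp1⟩ := hp
  have hpm : p * m ≤ m := mul_le_of_le_one_left m.cast_nonneg hp1
  rcases lt_or_ge (-(m : ℝ)) s with hms | hms
  · calc _ ≤ Real.exp (-(m / 2)) * 1 := by
          gcongr
          · exact abs_blaschkeProd_exp_grid_le hmn hs hms
          · exact Real.exp_le_one_iff.2 (mul_nonpos_of_nonneg_of_nonpos hp0 hs)
      _ ≤ Real.exp (-(p * m / 2)) := by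
          rw [mul_one, Real.exp_le_exp]
          linarith
  · calc _ ≤ 1 * Real.exp (p * -m) := by
          gcongr
          exact abs_blaschkeProd_le_one (fun i => Real.exp_pos _) n (Real.exp_pos s).le
      _ ≤ Real.exp (-(p * m / 2)) := by
          rw [one_mul, Real.exp_le_exp]
          linarith [mul_nonneg hp0 m.cast_nonneg]

theorem sigmoid_approx_exp_half_general {p : ℝ} (hp : p ∈ Set.Ioo 0 1) :
    ∃ C : ℝ, 0 < C ∧ ∀ n : ℕ, 1 ≤ n →
      ∃ (a : ℕ → ℝ) (s' : ℕ → ℝ),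
        ∀ s ∈ Set.Iic (0 : ℝ),
          |Real.exp (p * s) -
              (a 0 + ∑ k ∈ Finset.Icc 1 n, a k / (1 + Real.exp (s - s' k)))| ≤
            Real.exp (-C * Real.sqrt n) := by
  obtain ⟨μ, hμ⟩ := exists_isStieltjesTransform_rpow_sub_one hp
  refine ⟨p / 4, by linarith [hp.1], fun n hn => ?_⟩
  let m := Nat.sqrt n
  have hm : (1 : ℝ) ≤ m := Nat.one_le_cast.2 (Nat.sqrt_pos.2 hn)
  have hroot : √(n : ℝ) ≤ 2 * m := by linarith [Real.real_sqrt_lt_nat_sqrt_succ (a := n)]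
  have hinj : Function.Injective fun k : ℕ => -((k : ℝ) / m) := fun i j h =>
    Nat.cast_injective ((div_left_inj' (by positivity)).1 (neg_injective h))
  obtain ⟨a, ha⟩ := hμ.exists_sigmoid_approx hinj n
  refine ⟨a, fun k => -((k : ℝ) / m), fun s hs => ?_⟩
  have hexp : Real.exp s * Real.exp s ^ (p - 1) = Real.exp (p * s) := by
    rw [← Real.exp_mul, ← Real.exp_add]
    ring_nf
  calc _ ≤ |blaschkeProd (fun i => Real.exp (-((i + 1 : ℕ) / m))) n (Real.exp s)| *
          Real.exp (p * s) := by simpa only [hexp] using ha s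
    _ ≤ Real.exp (-(p * m / 2)) :=
        abs_blaschkeProd_exp_grid_mul_exp_le (Set.Ioo_subset_Icc_self hp) (Nat.sqrt_le n) hs
    _ ≤ Real.exp (-(p / 4) * √n) := by
        rw [Real.exp_le_exp]
        linarith [mul_le_mul_of_nonneg_left hroot hp.1.le]

/-- The smooth function `F(s) = e^{s/2}` on `(-∞,0]` admits root-exponentially
convergent approximation by a constant plus linear combinations of `n` translates
of the logistic sigmoid function. -/
theorem sigmoid_approx_exp_half :
    ∃ C : ℝ, 0 < C ∧ ∀ n : ℕ, 1 ≤ n →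
      ∃ (a : ℕ → ℝ) (s' : ℕ → ℝ),
        ∀ s ∈ Set.Iic (0 : ℝ),
          |Real.exp (s / 2) -
              (a 0 + ∑ k ∈ Finset.Icc 1 n, a k / (1 + Real.exp (s - s' k)))| ≤
            Real.exp (-C * Real.sqrt n) := by
  simpa only [one_div_mul_eq_div] using
    sigmoid_approx_exp_half_general (p := 1 / 2) ⟨by norm_num, by norm_num⟩
end

section
/- For every real α > 0 that is not an integer, there exists a constant C > 0 such that for every integer n ≥ 1 there exist real polynomials p and q, each of degree at most n, with q(x) > 0 for all x ∈ [0,1], such that |x^α − p(x)/q(x)| ≤ exp(−C·√n) for all x ∈ [0,1]. That is, the branch-point singular function x^α on [0,1] admits root-exponentially convergent type-(n,n) rational approximations. -/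
/-!
For `0 < p < 1` there is the Stieltjes representation
`x ^ p = K⁻¹ * ∫ t in Ioi 0, t ^ (p - 1) * (x / (t + x))`. Cut the integral down to
`[2 ^ (-J), 2 ^ J]`, which costs `O(2 ^ (-J * min p (1 - p)))` uniformly in `x ∈ [0, 1]`, and split
this interval into `2 * J` dyadic blocks `[b / 2, b]`. On each block, the geometric expansion of
`1 / (t + x) = 1 / ((b + x) - (b - t))` has ratio `(b - t) / (b + x) ≤ 1 / 2`, so that `J` terms of
it give relative accuracy `2 ^ (-J)` and a rational function whose only pole, of order `J`, is `-b`.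
The poles cluster exponentially at `0`, and `2 * J ^ 2` of them give an error geometric in `J`.
An arbitrary exponent is reduced to this case by splitting off its integer part.
-/

open Polynomial Set MeasureTheory Real

section RatApproxOn

variable {𝕜 : Type*} [Field 𝕜] [LinearOrder 𝕜]

/-- On `s`, the function `f` is within `ε` of a type-`(n, n)` rational function whose denominator is
positive there. The error bound is a function, so that relative errors can be expressed;
`ε = 0` says that `f` is itself such a rational function. -/
def RatApproxOn (s : Set 𝕜) (n : ℕ) (f ε : 𝕜 → 𝕜) : Prop :=
  ∃ p q : 𝕜[X], p.natDegree ≤ n ∧ q.natDegree ≤ n ∧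
    (∀ x ∈ s, 0 < q.eval x) ∧ ∀ x ∈ s, |f x - p.eval x / q.eval x| ≤ ε x

namespace RatApproxOn

variable {s t : Set 𝕜} {n m : ℕ} {f g ε δ : 𝕜 → 𝕜}

lemma mono_degree (hf : RatApproxOn s n f ε) (hnm : n ≤ m) : RatApproxOn s m f ε :=
  let ⟨p, q, hp, hq, hpos, h⟩ := hf
  ⟨p, q, hp.trans hnm, hq.trans hnm, hpos, h⟩

variable [IsStrictOrderedRing 𝕜]

lemma of_const {c : 𝕜} (h : ∀ x ∈ s, |f x - c| ≤ ε x) : RatApproxOn s 0 f ε :=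
  ⟨C c, 1, by simp, by simp, by simp, by simpa using h⟩

lemma of_close (hf : RatApproxOn s n f ε) (hts : t ⊆ s)
    (h : ∀ x ∈ t, |g x - f x| + ε x ≤ δ x) : RatApproxOn t n g δ := by
  obtain ⟨p, q, hp, hq, hpos, hpq⟩ := hf
  refine ⟨p, q, hp, hq, fun x hx => hpos x (hts hx), fun x hx => ?_⟩
  calc |g x - p.eval x / q.eval x| ≤ |g x - f x| + |f x - p.eval x / q.eval x| := abs_sub_le ..
    _ ≤ |g x - f x| + ε x := by gcongr; exact hpq x (hts hx)
    _ ≤ δ x := h x hx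

lemma mono_error (hf : RatApproxOn s n f ε) (h : ∀ x ∈ s, ε x ≤ δ x) : RatApproxOn s n f δ :=
  hf.of_close Subset.rfl (by simpa using h)

lemma add (hf : RatApproxOn s n f ε) (hg : RatApproxOn s m g δ) :
    RatApproxOn s (n + m) (fun x => f x + g x) (fun x => ε x + δ x) := by
  obtain ⟨p, q, hp, hq, hpos, h⟩ := hf
  obtain ⟨p', q', hp', hq', hpos', h'⟩ := hg
  refine ⟨p * q' + q * p', q * q', ?_, natDegree_mul_le_of_le hq hq', ?_, fun x hx => ?_⟩
  · exact natDegree_add_le_of_degree_le (natDegree_mul_le_of_le hp hq')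
      (natDegree_mul_le_of_le hq hp')
  · intro x hx
    simpa only [eval_mul] using mul_pos (hpos x hx) (hpos' x hx)
  · simp only [eval_add, eval_mul]
    rw [← div_add_div _ _ (hpos x hx).ne' (hpos' x hx).ne', add_sub_add_comm]
    exact (abs_add_le _ _).trans (add_le_add (h x hx) (h' x hx))

lemma eval_mul (P : 𝕜[X]) (hf : RatApproxOn s n f ε) :
    RatApproxOn s (P.natDegree + n) (fun x => P.eval x * f x) (fun x => |P.eval x| * ε x) := by
  obtain ⟨p, q, hp, hq, hpos, h⟩ := hf
  refine ⟨P * p, q, natDegree_mul_le_of_le le_rfl hp, hq.trans (Nat.le_add_left ..), hpos,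
    fun x hx => ?_⟩
  rw [Polynomial.eval_mul, mul_div_assoc, ← mul_sub, abs_mul]
  exact mul_le_mul_of_nonneg_left (h x hx) (abs_nonneg _)

lemma const_mul (c : 𝕜) (hf : RatApproxOn s n f ε) :
    RatApproxOn s n (fun x => c * f x) (fun x => |c| * ε x) := by
  simpa using hf.eval_mul (C c)

lemma sum_mul_div_add_pow {b : 𝕜} (hb : ∀ x ∈ s, 0 < b + x) (k : ℕ) (c : ℕ → 𝕜) :
    RatApproxOn s k (fun x => ∑ i ∈ Finset.range k, c i * (x / (b + x) ^ (i + 1))) 0 := by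
  refine ⟨∑ i ∈ Finset.range k, C (c i) * (X * (X + C b) ^ (k - 1 - i)), (X + C b) ^ k,
    natDegree_sum_le_of_forall_le _ _ fun i hi => ?_, by rw [natDegree_pow_X_add_C],
    fun x hx => by simpa [add_comm x] using pow_pos (hb x hx) k, fun x hx => ?_⟩
  · have hdeg : (X * (X + C b) ^ (k - 1 - i)).natDegree ≤ 1 + (k - 1 - i) :=
      natDegree_mul_le_of_le natDegree_X_le (natDegree_pow_X_add_C _ b).le
    have hi := Finset.mem_range.1 hi
    exact (natDegree_C_mul_le _ _).trans (hdeg.trans (by omega))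
  · have hbx := (hb x hx).ne'
    simp only [eval_finsetSum, Polynomial.eval_mul, eval_C, eval_X, eval_pow, eval_add,
      add_comm x b, Finset.sum_div, Pi.zero_apply, abs_nonpos_iff, sub_eq_zero]
    refine Finset.sum_congr rfl fun i hi => ?_
    have hi := Finset.mem_range.1 hi
    have hpow : (b + x) ^ k = (b + x) ^ (k - 1 - i) * (b + x) ^ (i + 1) := by
      rw [← pow_add]
      congr 1
      omega
    rw [hpow]
    field_simp

end RatApproxOn

end RatApproxOn

section StieltjesTransform

lemma div_add_sub_sum_pow_mul_div_add_pow {𝕜 : Type*} [Field 𝕜] {b t x : 𝕜} (hb : b + x ≠ 0)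
    (ht : t + x ≠ 0) (k : ℕ) :
    x / (t + x) - ∑ i ∈ Finset.range k, (b - t) ^ i * (x / (b + x) ^ (i + 1)) =
      ((b - t) / (b + x)) ^ k * (x / (t + x)) := by
  induction k with
  | zero => simp
  | succ k ih =>
    rw [Finset.sum_range_succ, ← sub_sub, ih, div_pow, div_pow]
    field_simp
    ring

variable {w : ℝ → ℝ} {a b x : ℝ}

lemma intervalIntegrable_mul_div_add (ha : 0 < a) (hab : a ≤ b) (hx : 0 ≤ x)
    (hw : IntervalIntegrable w volume a b) :
    IntervalIntegrable (fun t => w t * (x / (t + x))) volume a b := by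
  refine hw.mul_continuousOn (continuousOn_const.div (by fun_prop) fun t ht => ?_)
  rw [uIcc_of_le hab] at ht
  linarith [ht.1]

lemma abs_integral_mul_div_add_sub_sum_le (ha : 0 < a) (hab : a ≤ b) (hx : 0 ≤ x)
    (hw : IntervalIntegrable w volume a b) (hw0 : ∀ t ∈ Icc a b, 0 ≤ w t) (k : ℕ) :
    |(∫ t in a..b, w t * (x / (t + x))) -
        ∑ i ∈ Finset.range k, (∫ t in a..b, w t * (b - t) ^ i) * (x / (b + x) ^ (i + 1))| ≤
      ((b - a) / b) ^ k * ∫ t in a..b, w t * (x / (t + x)) := by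
  have hb : 0 < b := ha.trans_le hab
  have hf := intervalIntegrable_mul_div_add ha hab hx hw
  have hmoment (i : ℕ) :
      IntervalIntegrable (fun t => w t * (b - t) ^ i * (x / (b + x) ^ (i + 1))) volume a b :=
    (hw.mul_continuousOn (by fun_prop)).mul_const _
  have hsum : IntervalIntegrable (fun t =>
      ∑ i ∈ Finset.range k, w t * (b - t) ^ i * (x / (b + x) ^ (i + 1))) volume a b := by
    simpa only [Finset.sum_fn] using IntervalIntegrable.sum (Finset.range k) fun i _ => hmoment i
  have hremainder (t : ℝ) (ht : t ∈ Icc a b) :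
      w t * (x / (t + x)) - ∑ i ∈ Finset.range k, w t * (b - t) ^ i * (x / (b + x) ^ (i + 1)) =
        ((b - t) / (b + x)) ^ k * (w t * (x / (t + x))) := by
    have ht0 : 0 < t := ha.trans_le ht.1
    simp only [mul_assoc, ← Finset.mul_sum]
    rw [← mul_sub, div_add_sub_sum_pow_mul_div_add_pow (by positivity) (by positivity)]
    ring
  simp only [← intervalIntegral.integral_mul_const]
  rw [← intervalIntegral.integral_finsetSum fun i _ => hmoment i,
    ← intervalIntegral.integral_sub hf hsum,
    ← intervalIntegral.integral_const_mul, ← Real.norm_eq_abs]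
  refine intervalIntegral.norm_integral_le_of_norm_le hab (.of_forall fun t ht => ?_)
    (hf.const_mul _)
  have ht := Ioc_subset_Icc_self ht
  have ht0 : 0 < t := ha.trans_le ht.1
  have hbt : 0 ≤ b - t := sub_nonneg.2 ht.2
  have hwt := hw0 t ht
  rw [hremainder t ht, Real.norm_of_nonneg (by positivity)]
  gcongr <;> linarith [ht.1]

lemma ratApproxOn_integral_mul_div_add (ha : 0 < a) (hab : a ≤ b)
    (hw : IntervalIntegrable w volume a b) (hw0 : ∀ t ∈ Icc a b, 0 ≤ w t) (k : ℕ) :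
    RatApproxOn (Ici 0) k (fun x => ∫ t in a..b, w t * (x / (t + x)))
      (fun x => ((b - a) / b) ^ k * ∫ t in a..b, w t * (x / (t + x))) :=
  (RatApproxOn.sum_mul_div_add_pow
    (fun _ hx => add_pos_of_pos_of_nonneg (ha.trans_le hab) hx) k _).of_close Subset.rfl
    fun x hx => by simpa using abs_integral_mul_div_add_sub_sum_le ha hab hx hw hw0 k

lemma ratApproxOn_integral_mul_div_add_geometric {ρ : ℝ} (hρ : 1 ≤ ρ) (ha : 0 < a) (N k : ℕ)
    (hw : IntervalIntegrable w volume a (ρ ^ N * a)) (hw0 : ∀ t ∈ Icc a (ρ ^ N * a), 0 ≤ w t) :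
    RatApproxOn (Ici 0) (N * k) (fun x => ∫ t in a..ρ ^ N * a, w t * (x / (t + x)))
      (fun x => (1 - ρ⁻¹) ^ k * ∫ t in a..ρ ^ N * a, w t * (x / (t + x))) := by
  induction N with
  | zero => exact RatApproxOn.mono_degree (RatApproxOn.of_const (c := 0) (by simp)) (by simp)
  | succ N ih =>
    set b := ρ ^ N * a with hb
    have hsucc : ρ ^ (N + 1) * a = ρ * b := by rw [hb]; ring
    rw [hsucc] at hw hw0 ⊢
    have hab : a ≤ b := le_mul_of_one_le_left ha.le (one_le_pow₀ hρ)
    have hb0 : 0 < b := ha.trans_le hab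
    have hbρ : b ≤ ρ * b := le_mul_of_one_le_left hb0.le hρ
    have hw₁ : IntervalIntegrable w volume a b :=
      hw.mono_set (uIcc_subset_uIcc_left ⟨by simp [hab], by simp [hbρ]⟩)
    have hw₂ : IntervalIntegrable w volume b (ρ * b) :=
      hw.mono_set (uIcc_subset_uIcc_right ⟨by simp [hab], by simp [hbρ]⟩)
    have hratio : (ρ * b - b) / (ρ * b) = 1 - ρ⁻¹ := by field_simp
    have hsum := (ih hw₁ fun t ht => hw0 t ⟨ht.1, ht.2.trans hbρ⟩).add
      (ratApproxOn_integral_mul_div_add hb0 hbρ hw₂ (fun t ht => hw0 t ⟨hab.trans ht.1, ht.2⟩) k)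
    rw [Nat.succ_mul]
    refine hsum.of_close Subset.rfl fun x hx => le_of_eq ?_
    rw [hratio, ← mul_add, intervalIntegral.integral_add_adjacent_intervals
      (intervalIntegrable_mul_div_add ha hab hx hw₁)
      (intervalIntegrable_mul_div_add hb0 hbρ hx hw₂), sub_self, abs_zero, zero_add]

end StieltjesTransform

section RpowIntegrand

variable {p a b x : ℝ}

lemma intervalIntegrable_rpowIntegrand₀₁ (hp : p ∈ Ioo 0 1) (hx : 0 ≤ x) (ha : 0 ≤ a)
    (hb : 0 ≤ b) : IntervalIntegrable (rpowIntegrand₀₁ p · x) volume a b :=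
  intervalIntegrable_iff.2 <| (integrableOn_rpowIntegrand₀₁_Ioi hp hx).mono_set
    fun _ ht => (le_min ha hb).trans_lt ht.1

lemma intervalIntegral_rpowIntegrand₀₁_le (hp : p ∈ Ioo 0 1) (ha : 0 ≤ a) (hx : 0 ≤ x) :
    ∫ t in 0..a, rpowIntegrand₀₁ p t x ≤ a ^ p / p := by
  have hp' : -1 < p - 1 := by linarith [hp.1]
  calc ∫ t in 0..a, rpowIntegrand₀₁ p t x ≤ ∫ t in 0..a, t ^ (p - 1) :=
        intervalIntegral.integral_mono_on ha (intervalIntegrable_rpowIntegrand₀₁ hp hx le_rfl ha)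
          (intervalIntegral.intervalIntegrable_rpow' hp') fun t ht =>
            rpowIntegrand₀₁_le_rpow_sub_one hp ht.1 hx
    _ = a ^ p / p := by simp [integral_rpow (.inl hp'), Real.zero_rpow hp.1.ne']

lemma setIntegral_Ioi_rpowIntegrand₀₁_le (hp : p ∈ Ioo 0 1) (hb : 0 < b) (hx : 0 ≤ x) :
    ∫ t in Ioi b, rpowIntegrand₀₁ p t x ≤ b ^ (p - 1) / (1 - p) * x := by
  have hp' : p - 2 < -1 := by linarith [hp.2]
  calc ∫ t in Ioi b, rpowIntegrand₀₁ p t x ≤ ∫ t in Ioi b, t ^ (p - 2) * x :=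
        setIntegral_mono_on
          ((integrableOn_rpowIntegrand₀₁_Ioi hp hx).mono_set (Ioi_subset_Ioi hb.le))
          ((integrableOn_Ioi_rpow_of_lt hp' hb).mul_const x) measurableSet_Ioi fun t ht =>
            rpowIntegrand₀₁_le_rpow_sub_two_mul_self hp (hb.trans ht) hx
    _ = b ^ (p - 1) / (1 - p) * x := by
      rw [integral_mul_const, integral_Ioi_rpow_of_lt hp' hb, show p - 2 + 1 = p - 1 by ring,
        ← neg_sub p 1, div_neg, neg_div]

lemma integral_Ioi_rpowIntegrand₀₁_eq_add_add (hp : p ∈ Ioo 0 1) (ha : 0 ≤ a) (hb : 0 ≤ b)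
    (hx : 0 ≤ x) :
    ∫ t in Ioi 0, rpowIntegrand₀₁ p t x =
      (∫ t in 0..a, rpowIntegrand₀₁ p t x) + (∫ t in a..b, rpowIntegrand₀₁ p t x) +
        ∫ t in Ioi b, rpowIntegrand₀₁ p t x := by
  have hint := integrableOn_rpowIntegrand₀₁_Ioi hp hx
  rw [intervalIntegral.integral_add_adjacent_intervals
    (intervalIntegrable_rpowIntegrand₀₁ hp hx le_rfl ha)
    (intervalIntegrable_rpowIntegrand₀₁ hp hx ha hb),
    intervalIntegral.integral_interval_add_Ioi hint (hint.mono_set (Ioi_subset_Ioi hb))]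

lemma intervalIntegral_rpowIntegrand₀₁_le_integral_Ioi (hp : p ∈ Ioo 0 1) (ha : 0 ≤ a)
    (hb : 0 ≤ b) (hx : 0 ≤ x) :
    ∫ t in a..b, rpowIntegrand₀₁ p t x ≤ ∫ t in Ioi 0, rpowIntegrand₀₁ p t x := by
  have hhead : 0 ≤ ∫ t in 0..a, rpowIntegrand₀₁ p t x :=
    intervalIntegral.integral_nonneg ha fun t ht => rpowIntegrand₀₁_nonneg hp.1 ht.1 hx
  have htail : 0 ≤ ∫ t in Ioi b, rpowIntegrand₀₁ p t x :=
    setIntegral_nonneg measurableSet_Ioi fun t ht =>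
      rpowIntegrand₀₁_nonneg hp.1 (hb.trans (le_of_lt ht)) hx
  linarith [integral_Ioi_rpowIntegrand₀₁_eq_add_add hp ha hb hx]

lemma ratApproxOn_intervalIntegral_rpowIntegrand₀₁ (hp : p ∈ Ioo 0 1) (ha : 0 < a) (N k : ℕ) :
    RatApproxOn (Ici 0) (N * k) (fun x => ∫ t in a..2 ^ N * a, rpowIntegrand₀₁ p t x)
      (fun x => (1 / 2) ^ k * ∫ t in a..2 ^ N * a, rpowIntegrand₀₁ p t x) := by
  have hab : a ≤ 2 ^ N * a := le_mul_of_one_le_left ha.le (one_le_pow₀ one_le_two)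
  have hpos {t : ℝ} (ht : t ∈ Icc a (2 ^ N * a)) : 0 < t := ha.trans_le ht.1
  have hw : IntervalIntegrable (fun t : ℝ => t ^ (p - 1)) volume a (2 ^ N * a) :=
    intervalIntegral.intervalIntegrable_rpow' (by linarith [hp.1])
  have hkernel {x : ℝ} (hx : x ∈ Ici 0) : ∫ t in a..2 ^ N * a, rpowIntegrand₀₁ p t x =
      ∫ t in a..2 ^ N * a, t ^ (p - 1) * (x / (t + x)) := by
    refine intervalIntegral.integral_congr fun t ht => ?_
    rw [uIcc_of_le hab] at ht
    simp only [rpowIntegrand₀₁_eq_pow_div hp (hpos ht).le hx, mul_div_assoc]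
  refine (ratApproxOn_integral_mul_div_add_geometric one_le_two ha N k hw
    fun t ht => rpow_nonneg (hpos ht).le _).of_close Subset.rfl fun x hx => le_of_eq ?_
  rw [hkernel hx]
  norm_num

end RpowIntegrand

section Rpow

variable {p : ℝ}

lemma ratApproxOn_rpow_of_mem_Ioo (hp : p ∈ Ioo 0 1) {a : ℝ} (ha : 0 < a) (N k : ℕ) :
    RatApproxOn (Icc 0 1) (N * k) (fun x => x ^ p) (fun _ =>
      (∫ t in Ioi 0, rpowIntegrand₀₁ p t 1)⁻¹ *
        (a ^ p / p + (2 ^ N * a) ^ (p - 1) / (1 - p)) + (1 / 2) ^ k) := by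
  set K := ∫ t in Ioi 0, rpowIntegrand₀₁ p t 1
  have hK : 0 < K := integral_rpowIntegrand₀₁_one_pos hp
  set b := 2 ^ N * a
  have hb : 0 < b := by positivity
  refine ((ratApproxOn_intervalIntegral_rpowIntegrand₀₁ hp ha N k).const_mul K⁻¹).of_close
    Icc_subset_Ici_self fun x hx => ?_
  set I := ∫ t in a..b, rpowIntegrand₀₁ p t x
  have hrep := integral_rpowIntegrand₀₁_eq_rpow_mul_const hp hx.1
  have hI_le : I ≤ x ^ p * K :=
    hrep ▸ intervalIntegral_rpowIntegrand₀₁_le_integral_Ioi hp ha.le hb.le hx.1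
  have hI_ge : x ^ p * K - I ≤ a ^ p / p + b ^ (p - 1) / (1 - p) := by
    have hsplit := integral_Ioi_rpowIntegrand₀₁_eq_add_add hp ha.le hb.le hx.1
    have hhead := intervalIntegral_rpowIntegrand₀₁_le hp ha.le hx.1
    have htail := (setIntegral_Ioi_rpowIntegrand₀₁_le hp hb hx.1).trans <|
      mul_le_of_le_one_right (div_nonneg (by positivity) (sub_nonneg.2 hp.2.le)) hx.2
    linarith
  have htrunc : |x ^ p - K⁻¹ * I| = K⁻¹ * (x ^ p * K - I) := by
    rw [show x ^ p - K⁻¹ * I = K⁻¹ * (x ^ p * K - I) by field_simp,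
      abs_of_nonneg (mul_nonneg (inv_pos.2 hK).le (sub_nonneg.2 hI_le))]
  have hblocks : |K⁻¹| * ((1 / 2) ^ k * I) ≤ (1 / 2) ^ k := by
    have hI : K⁻¹ * I ≤ 1 := by
      rw [inv_mul_le_one₀ hK]
      exact hI_le.trans (mul_le_of_le_one_left hK.le (rpow_le_one hx.1 hx.2 hp.1.le))
    rw [abs_of_pos (inv_pos.2 hK), mul_left_comm]
    exact mul_le_of_le_one_right (by positivity) hI
  rw [htrunc]
  gcongr

lemma exists_ratApproxOn_rpow_of_mem_Ioo (hp : p ∈ Ioo 0 1) :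
    ∃ M r : ℝ, 1 ≤ M ∧ r ∈ Ioo 0 1 ∧ ∀ J : ℕ,
      RatApproxOn (Icc 0 1) (2 * J ^ 2) (fun x => x ^ p) (fun _ => M * r ^ J) := by
  set K := ∫ t in Ioi 0, rpowIntegrand₀₁ p t 1
  have hK : 0 < K := integral_rpowIntegrand₀₁_one_pos hp
  have hp0 : 0 < p := hp.1
  have hp1 : 0 < 1 - p := sub_pos.2 hp.2
  set r : ℝ := (1 / 2) ^ min p (1 - p)
  have hr0 : 0 < r := by positivity
  have hr (q : ℝ) (hq : min p (1 - p) ≤ q) (J : ℕ) : ((1 / 2 : ℝ) ^ J) ^ q ≤ r ^ J := by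
    rw [← rpow_pow_comm (by norm_num)]
    gcongr
    exact rpow_le_rpow_of_exponent_ge (by norm_num) (by norm_num) hq
  refine ⟨K⁻¹ * (1 / p + 1 / (1 - p)) + 1, r, le_add_of_nonneg_left (by positivity),
    ⟨hr0, rpow_lt_one (by norm_num) (by norm_num) (lt_min hp0 hp1)⟩, fun J => ?_⟩
  have happrox := ratApproxOn_rpow_of_mem_Ioo hp (a := (1 / 2) ^ J) (by positivity) (2 * J) J
  rw [show 2 * J * J = 2 * J ^ 2 by ring] at happrox
  refine happrox.mono_error fun _ _ => ?_
  have hhead := hr p (min_le_left _ _) J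
  have hright : 2 ^ (2 * J) * (1 / 2 : ℝ) ^ J = ((1 / 2) ^ J)⁻¹ := by
    rw [two_mul, pow_add, one_div, inv_pow]
    field_simp
  have htail : (2 ^ (2 * J) * (1 / 2 : ℝ) ^ J) ^ (p - 1) ≤ r ^ J := by
    rw [hright, inv_rpow (by positivity), ← rpow_neg (by positivity), neg_sub]
    exact hr _ (min_le_right _ _) J
  have hblocks : (1 / 2 : ℝ) ^ J ≤ r ^ J := by
    simpa using hr 1 ((min_le_left _ _).trans hp.2.le) J
  calc _ ≤ K⁻¹ * (r ^ J / p + r ^ J / (1 - p)) + r ^ J := by gcongr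
    _ = _ := by ring

lemma exists_ratApproxOn_rpow_of_mem_Ico (hp : p ∈ Ico 0 1) :
    ∃ M r : ℝ, 1 ≤ M ∧ r ∈ Ioo 0 1 ∧ ∀ J : ℕ,
      RatApproxOn (Icc 0 1) (2 * J ^ 2) (fun x => x ^ p) (fun _ => M * r ^ J) := by
  rcases hp.1.eq_or_lt with rfl | hp0
  · exact ⟨1, 1 / 2, le_rfl, by norm_num, fun J =>
      (RatApproxOn.of_const (c := 1) (by simp)).mono_degree (Nat.zero_le _)⟩
  · exact exists_ratApproxOn_rpow_of_mem_Ioo ⟨hp0, hp.2⟩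

lemma exists_ratApproxOn_rpow {α : ℝ} (hα : 0 ≤ α) :
    ∃ A : ℕ, 0 < A ∧ ∃ M r : ℝ, 1 ≤ M ∧ r ∈ Ioo 0 1 ∧ ∀ J : ℕ,
      RatApproxOn (Icc 0 1) (A * J ^ 2) (fun x => x ^ α) (fun _ => M * r ^ J) := by
  obtain ⟨M, r, hM, hr, happrox⟩ := exists_ratApproxOn_rpow_of_mem_Ico
    (p := α - ⌊α⌋₊) ⟨sub_nonneg.2 (Nat.floor_le hα), by linarith [Nat.lt_floor_add_one α]⟩
  refine ⟨⌊α⌋₊ + 2, by omega, M, r, hM, hr, fun J => ?_⟩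
  rcases J.eq_zero_or_pos with rfl | hJ
  · refine RatApproxOn.of_const (c := 0) fun x hx => ?_
    rw [sub_zero, abs_of_nonneg (rpow_nonneg hx.1 α), pow_zero, mul_one]
    exact (rpow_le_one hx.1 hx.2 hα).trans hM
  · have hdeg : ⌊α⌋₊ + 2 * J ^ 2 ≤ (⌊α⌋₊ + 2) * J ^ 2 := by
      rw [add_mul]
      gcongr
      exact Nat.le_mul_of_pos_right _ (by positivity)
    have hmul := (happrox J).eval_mul (X ^ ⌊α⌋₊)
    rw [natDegree_X_pow] at hmul
    refine (hmul.mono_degree hdeg).of_close Subset.rfl fun x hx => ?_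
    have hsplit : x ^ α = x ^ ⌊α⌋₊ * x ^ (α - ⌊α⌋₊) := by
      rw [← rpow_natCast, ← rpow_add_of_nonneg hx.1 (Nat.cast_nonneg _)
        (sub_nonneg.2 (Nat.floor_le hα)), add_sub_cancel]
    have hr0 : 0 < r := hr.1
    rw [eval_X_pow, hsplit, sub_self, abs_zero, zero_add, abs_of_nonneg (pow_nonneg hx.1 _)]
    exact mul_le_of_le_one_left (by positivity) (pow_le_one₀ hx.1 hx.2)

end Rpow

section RootExponential

lemma exists_min_half_mul_exp_le {M c : ℝ} (hM : 1 ≤ M) (hc : 0 < c) :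
    ∃ C : ℝ, 0 < C ∧ ∀ s : ℝ, min (1 / 2) (M * exp (-c * s)) ≤ exp (-C * s) := by
  have hM0 : 0 < M := one_pos.trans_le hM
  have hlogM : 0 ≤ log M := log_nonneg hM
  -- With this `θ`, `(1 / 2) ^ (1 - θ) * M ^ θ = 1`, so that `min u v ≤ u ^ (1 - θ) * v ^ θ`
  -- removes the factor `M`.
  set θ := log 2 / (log 2 + log M) with hθ
  have hθ1 : θ ≤ 1 := by
    rw [hθ, div_le_one (by positivity)]
    linarith
  have hθM : θ * (log 2 + log M) = log 2 := by
    rw [hθ]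
    field_simp
  refine ⟨θ * c, by positivity, fun s => ?_⟩
  have hhalf : (1 / 2 : ℝ) = exp (-log 2) := by rw [exp_neg, exp_log two_pos, one_div]
  have hexp : M * exp (-c * s) = exp (log M - c * s) := by
    rw [sub_eq_add_neg, exp_add, exp_log hM0, neg_mul]
  rw [hhalf, hexp, ← exp_monotone.map_min, exp_le_exp]
  set m := min (-log 2) (log M - c * s)
  calc m = (1 - θ) * m + θ * m := by ring
    _ ≤ (1 - θ) * -log 2 + θ * (log M - c * s) := by
      gcongr
      exacts [min_le_left _ _, min_le_right _ _]
    _ = -(θ * c) * s := by linear_combination hθM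

lemma sqrt_le_mul_sqrt_div_add_one (n : ℕ) {A : ℕ} (hA : 0 < A) :
    √(n : ℝ) ≤ A * ((Nat.sqrt (n / A) : ℝ) + 1) := by
  have hlt : n < (Nat.sqrt (n / A) + 1) ^ 2 * A :=
    (Nat.div_lt_iff_lt_mul hA).1 (Nat.lt_succ_sqrt' _)
  have hle : n ≤ (A * (Nat.sqrt (n / A) + 1)) ^ 2 := by
    rw [mul_pow, mul_comm (A ^ 2)]
    exact hlt.le.trans (Nat.mul_le_mul_left _ (Nat.le_self_pow two_ne_zero A))
  exact sqrt_le_iff.2 ⟨by positivity, by exact_mod_cast hle⟩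

lemma exists_ratApproxOn_exp_neg_mul_sqrt {s : Set ℝ} {f : ℝ → ℝ} {A : ℕ} {M r : ℝ}
    (hf : ∀ x ∈ s, f x ∈ Icc 0 1) (hA : 0 < A) (hM : 1 ≤ M) (hr : r ∈ Ioo 0 1)
    (happrox : ∀ J : ℕ, RatApproxOn s (A * J ^ 2) f (fun _ => M * r ^ J)) :
    ∃ C : ℝ, 0 < C ∧ ∀ n : ℕ, RatApproxOn s n f (fun _ => exp (-C * √n)) := by
  have hr0 : 0 < r := hr.1
  have hA0 : (0 : ℝ) < A := by exact_mod_cast hA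
  have hlogr : 0 < -log r := neg_pos.2 (log_neg hr.1 hr.2)
  obtain ⟨C, hC, hmin⟩ := exists_min_half_mul_exp_le (M := M / r) (c := -log r / A)
    ((one_le_div hr0).2 (hr.2.le.trans hM)) (by positivity)
  refine ⟨C, hC, fun n => ?_⟩
  rcases min_le_iff.1 (hmin √n) with hhalf | hexp
  · refine RatApproxOn.mono_degree (RatApproxOn.of_const (c := 1 / 2) fun x hx => ?_) n.zero_le
    have := hf x hx
    exact (abs_le.2 ⟨by linarith [this.1], by linarith [this.2]⟩).trans hhalf
  · set J := Nat.sqrt (n / A)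
    have hdeg : A * J ^ 2 ≤ n :=
      (Nat.mul_le_mul_left A (Nat.sqrt_le' _)).trans (Nat.mul_div_le n A)
    refine ((happrox J).mono_degree hdeg).mono_error fun _ _ => le_trans ?_ hexp
    have hJ : √n / A ≤ J + 1 := (div_le_iff₀' hA0).2 (sqrt_le_mul_sqrt_div_add_one n hA)
    calc M * r ^ J = M / r * r ^ ((J : ℝ) + 1) := by
          rw [rpow_add_one hr0.ne', rpow_natCast]
          field_simp
      _ ≤ M / r * r ^ (√n / A) := by
          gcongr ?_ * ?_
          exact rpow_le_rpow_of_exponent_ge hr0 hr.2.le hJ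
      _ = M / r * exp (-(-log r / A) * √n) := by
          rw [rpow_def_of_pos hr0]
          ring_nf

end RootExponential

theorem rpow_rational_approx_root_exponential_general {α : ℝ} (hα : 0 ≤ α) :
    ∃ C : ℝ, 0 < C ∧ ∀ n : ℕ,
      RatApproxOn (Icc 0 1) n (fun x => x ^ α) (fun _ => exp (-C * √n)) := by
  obtain ⟨A, hA, M, r, hM, hr, happrox⟩ := exists_ratApproxOn_rpow hα
  exact exists_ratApproxOn_exp_neg_mul_sqrt
    (fun x hx => ⟨rpow_nonneg hx.1 α, rpow_le_one hx.1 hx.2 hα⟩) hA hM hr happrox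

/-- The branch-point singular function `x^α` on `[0,1]` (for non-integer `α > 0`)
admits root-exponentially convergent type-`(n,n)` rational approximations. -/
theorem rpow_rational_approx_root_exponential (α : ℝ) (hα : 0 < α)
    (hα' : ¬∃ m : ℤ, α = m) :
    ∃ C : ℝ, 0 < C ∧ ∀ n : ℕ, 1 ≤ n →
      ∃ p q : Polynomial ℝ, p.natDegree ≤ n ∧ q.natDegree ≤ n ∧
        (∀ x ∈ Set.Icc (0 : ℝ) 1, 0 < q.eval x) ∧
        ∀ x ∈ Set.Icc (0 : ℝ) 1,
          |x ^ α - p.eval x / q.eval x| ≤ Real.exp (-C * Real.sqrt n) :=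
  let ⟨C, hC, happrox⟩ := rpow_rational_approx_root_exponential_general hα.le
  ⟨C, hC, fun n _ => happrox n⟩
end
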